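/- There exists an absolute constant C such that for all integers h, k, m with 1 ≤ h < k, gcd(h,k) = 1 and 0 ≤ m < k, setting L := k²: | Σ_{j=1}^m ( -log|2 sin(π j h/k)| ) − (k/(2π))·Σ_{l=-L}^{L} Σ_{n=1}^{k-1} sin(2π m (nh+lk)/k)/(n(nh+lk)) | ≤ C·log k. (All denominators n(nh+lk) in the double sum are nonzero, since gcd(h,k) = 1 and 1 ≤ n ≤ k-1 force nh + lk ≠ 0.) -/

import Mathlib

/-!
Put `x j = jh/k`. The Fourier series `-log |2 sin πx| = ∑_{n ≥ 1} cos (2πnx) / n`, cut at `n < k`,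
has error at most `1 / (k |sin πx|)` (`log_sin_tail`). Since the residues `jh mod k` are distinct
and nonzero, these errors add up to at most `1 + log k` over `1 ≤ j ≤ m` (`sum_inv_sin_le`).

Exchanging the sums and using
`∑_{j=1}^m cos (jt) = (cos (mt) - 1) / 2 + cot (t/2) sin (mt) / 2` with `t = 2π x n`
(`sum_cos_eq`), the first summand contributes at most `∑_{n<k} 1/n ≤ 1 + log k`. What remains is
`∑_{n<k} cot (π x n) sin (2πm x n) / (2n)`. Replacing `π cot (π x n)` by its partial fractions
`∑_{|l| ≤ k²} 1 / (x n + l)` costs at most `4 x n / k² ≤ 2` (`cot_partial`), hence again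
at most `∑_{n<k} 1/n`, and the outcome is exactly the double sum, because
`sin (2πm (x n + l)) = sin (2πm x n)`.
-/

open scoped Real
open Filter Topology

/-- Summation by parts for a block of the series `∑ wⁿ / n`. Multiplying by `1 - w` telescopes the
block up to the two boundary terms; subtracting these makes the bound provable by induction on `M`. -/
lemma abel_log_partial (w : ℂ) (hw : ‖w‖ ≤ 1) (N : ℕ) (hN : 1 ≤ N) (M : ℕ) (hM : N ≤ M) :
    ‖(1 - w) * (∑ n ∈ Finset.range M, w ^ n / n - ∑ n ∈ Finset.range N, w ^ n / n)
      - w ^ N / N + w ^ M / M‖ ≤ 1 / (N : ℝ) - 1 / M := by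
  induction M, hM using Nat.le_induction with
  | base => simp
  | succ M hM ih =>
    have hM0 : (0 : ℝ) < M := by exact_mod_cast (by omega : 0 < M)
    have hMc : (M : ℂ) ≠ 0 := by exact_mod_cast hM0.ne'
    have hMc' : (M : ℂ) + 1 ≠ 0 := by exact_mod_cast (by omega : M + 1 ≠ 0)
    rw [Finset.sum_range_succ]
    have e : (1 - w) * (∑ n ∈ Finset.range M, w ^ n / n + w ^ M / M
          - ∑ n ∈ Finset.range N, w ^ n / n) - w ^ N / N + w ^ (M + 1) / ((M + 1 : ℕ) : ℂ)
        = ((1 - w) * (∑ n ∈ Finset.range M, w ^ n / n - ∑ n ∈ Finset.range N, w ^ n / n)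
      - w ^ N / N + w ^ M / M) + w ^ (M + 1) * (((1 / ((M : ℝ) + 1) - 1 / M : ℝ)) : ℂ) := by
      push_cast
      field_simp
      ring
    rw [e]
    refine (norm_add_le _ _).trans ?_
    have h1 : ‖w ^ (M + 1) * (((1 / ((M : ℝ) + 1) - 1 / M : ℝ)) : ℂ)‖
        ≤ 1 / (M : ℝ) - 1 / ((M : ℝ) + 1) := by
      have h2 : 1 / ((M : ℝ) + 1) ≤ 1 / M := by gcongr; linarith
      rw [norm_mul, norm_pow, Complex.norm_real, Real.norm_eq_abs, abs_of_nonpos (by linarith)]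
      have := pow_le_one₀ (n := M + 1) (norm_nonneg w) hw
      nlinarith
    rw [Nat.cast_add_one (R := ℝ)]
    linarith

/-- Letting `M → ∞` in `abel_log_partial`. Unlike the geometric bound on the tail, this one stays
bounded as `‖w‖ → 1`. -/
lemma norm_log_tail_lt (w : ℂ) (hw : ‖w‖ < 1) (N : ℕ) (hN : 1 ≤ N) :
    ‖(1 - w) * (-Complex.log (1 - w) - ∑ n ∈ Finset.range N, w ^ n / n)‖ ≤ 2 / (N : ℝ) := by
  have ht := (Complex.hasSum_taylorSeries_neg_log hw).tendsto_sum_nat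
  have ht2 := ((ht.sub_const (∑ n ∈ Finset.range N, w ^ n / n)).const_mul (1 - w)).norm
  refine le_of_tendsto ht2 ?_
  filter_upwards [eventually_ge_atTop N] with M hM
  have h := abel_log_partial w hw.le N hN M hM
  have bd : ∀ K : ℕ, ‖w ^ K / K‖ ≤ 1 / (K : ℝ) := fun K => by
    rw [norm_div, norm_pow, Complex.norm_natCast]
    gcongr
    exact pow_le_one₀ (norm_nonneg w) hw.le
  set A := (1 - w) * (∑ n ∈ Finset.range M, w ^ n / n - ∑ n ∈ Finset.range N, w ^ n / n)
  have e : A = (A - w ^ N / N + w ^ M / M) + w ^ N / N - w ^ M / M := by ring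
  rw [e]
  refine (norm_sub_le _ _).trans ?_
  have h3 := norm_add_le (A - w ^ N / N + w ^ M / M) (w ^ N / N)
  have h4 := bd N
  have h5 := bd M
  have : 2 / (N : ℝ) = 1 / N + 1 / N := by ring
  linarith

/-- The bound of `norm_log_tail_lt` extends to the unit circle minus `1` by radial continuity,
since `1 - w` stays in the slit plane. -/
lemma norm_log_tail_le (w : ℂ) (hw : ‖w‖ ≤ 1) (hw1 : w ≠ 1) (N : ℕ) (hN : 1 ≤ N) :
    ‖(1 - w) * (-Complex.log (1 - w) - ∑ n ∈ Finset.range N, w ^ n / n)‖ ≤ 2 / (N : ℝ) := by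
  have hs : 1 - w ∈ Complex.slitPlane := by
    refine Or.inl ?_
    have h1 := Complex.re_le_norm w
    rcases h1.lt_or_eq with h | h
    · simp; linarith
    · have him : w.im = 0 := by
        have := Complex.sq_norm w
        rw [Complex.normSq_apply] at this
        have : w.im * w.im = 0 := by rw [← h] at this; linarith
        simpa using this
      have : w.re ≠ 1 := fun hre => hw1 (Complex.ext (by simpa using hre) (by simpa using him))
      have : w.re < 1 := lt_of_le_of_ne (h1.trans hw) this
      simp; linarith
  have hc : ContinuousAt (fun r : ℝ => ‖(1 - (r : ℂ) * w) * (-Complex.log (1 - r * w)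
      - ∑ n ∈ Finset.range N, ((r : ℂ) * w) ^ n / n)‖) 1 := by
    have hl : ContinuousAt (fun r : ℝ => Complex.log (1 - (r : ℂ) * w)) 1 :=
      ContinuousAt.clog (by fun_prop) (by simpa using hs)
    have hsum : ContinuousAt (fun r : ℝ => ∑ n ∈ Finset.range N, ((r : ℂ) * w) ^ n / n) 1 := by
      apply Continuous.continuousAt
      fun_prop
    have h1 : ContinuousAt (fun r : ℝ => 1 - (r : ℂ) * w) 1 := by fun_prop
    exact (h1.mul (hl.neg.sub hsum)).norm
  have ht := hc.tendsto.mono_left (nhdsWithin_le_nhds (s := Set.Iio 1))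
  simp only [Complex.ofReal_one, one_mul] at ht
  refine le_of_tendsto ht ?_
  filter_upwards [Ioo_mem_nhdsLT (show (0 : ℝ) < 1 by norm_num)] with r hr
  refine norm_log_tail_lt _ ?_ N hN
  rw [norm_mul, Complex.norm_real, Real.norm_eq_abs, abs_of_pos hr.1]
  have := hr.1
  have := hr.2
  nlinarith [norm_nonneg w]

/-- Truncation error of the Fourier series `-log |2 sin πx| = ∑ cos (2πnx) / n`: the real part of
`norm_log_tail_le` at `w = exp (2πix)`, for which `‖1 - w‖ = 2 |sin πx|`. -/
lemma log_sin_tail (x : ℝ) (hx : Real.sin (π * x) ≠ 0) (N : ℕ) (hN : 1 ≤ N) :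
    |-Real.log |2 * Real.sin (π * x)|
      - ∑ n ∈ Finset.Icc 1 (N - 1), Real.cos (n * (2 * π * x)) / n|
      ≤ 1 / (N * |Real.sin (π * x)|) := by
  set w : ℂ := Complex.exp (Complex.I * ((2 * π * x : ℝ) : ℂ)) with hwdef
  have hn : ‖1 - w‖ = |2 * Real.sin (π * x)| := by
    rw [norm_sub_rev, hwdef, Complex.norm_exp_I_mul_ofReal_sub_one, Real.norm_eq_abs]
    congr 3; ring
  have hpos : 0 < |Real.sin (π * x)| := abs_pos.mpr hx
  have hn2 : ‖1 - w‖ = 2 * |Real.sin (π * x)| := by rw [hn, abs_mul]; norm_num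
  have hw1 : w ≠ 1 := by
    intro h
    rw [h] at hn2
    simp at hn2
    exact hx hn2
  have hw : ‖w‖ = 1 := by rw [hwdef, mul_comm]; exact Complex.norm_exp_ofReal_mul_I _
  have h := norm_log_tail_le w hw.le hw1 N hN
  have hre : (-Complex.log (1 - w) - ∑ n ∈ Finset.range N, w ^ n / n).re
      = -Real.log |2 * Real.sin (π * x)|
      - ∑ n ∈ Finset.Icc 1 (N - 1), Real.cos (n * (2 * π * x)) / n := by
    rw [Complex.sub_re, Complex.neg_re, Complex.log_re, hn, Complex.re_sum]
    congr 1
    have hr : Finset.range N = insert 0 (Finset.Icc 1 (N - 1)) := by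
      ext a; simp; omega
    rw [hr, Finset.sum_insert (by simp)]
    simp only [Nat.cast_zero, div_zero, Complex.zero_re, zero_add]
    refine Finset.sum_congr rfl fun n _ => ?_
    rw [hwdef, ← Complex.exp_nat_mul, Complex.div_natCast_re]
    congr 1
    have : (n : ℂ) * (Complex.I * ((2 * π * x : ℝ) : ℂ))
        = ((n * (2 * π * x) : ℝ) : ℂ) * Complex.I := by push_cast; ring
    rw [this, Complex.exp_ofReal_mul_I_re]
  rw [← hre]
  refine (Complex.abs_re_le_norm _).trans ?_
  rw [norm_mul, hn2] at h
  have hN0 : (0 : ℝ) < N := by exact_mod_cast hN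
  rw [le_div_iff₀ hN0] at h
  rw [le_div_iff₀ (by positivity)]
  linarith

lemma sum_cos_eq (t : ℝ) (ht : Real.sin (t / 2) ≠ 0) (m : ℕ) :
    ∑ j ∈ Finset.Icc 1 m, Real.cos (j * t)
      = (Real.cos (m * t) - 1) / 2 + Real.cot (t / 2) * Real.sin (m * t) / 2 := by
  induction m with
  | zero => simp
  | succ m ih =>
    rw [Finset.sum_Icc_succ_top (by omega), ih, Real.cot_eq_cos_div_sin]
    have e : ((m + 1 : ℕ) : ℝ) * t = m * t + 2 * (t / 2) := by push_cast; ring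
    rw [e, Real.cos_add, Real.sin_add, Real.cos_two_mul, Real.sin_two_mul]
    rw [Real.cos_sq']
    field_simp
    linear_combination (-2 * Real.cos (m * t) * Real.sin (t / 2)) * Real.sin_sq_add_cos_sq (t / 2)

lemma sum_Icc_neg (f : ℤ → ℝ) (L : ℕ) :
    ∑ l ∈ Finset.Icc (-(L : ℤ)) L, f l
      = f 0 + ∑ j ∈ Finset.range L, (f (-((j : ℤ) + 1)) + f ((j : ℤ) + 1)) := by
  induction L with
  | zero => simp
  | succ L ih =>
    have : Finset.Icc (-((L + 1 : ℕ) : ℤ)) ((L + 1 : ℕ) : ℤ)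
        = insert (-((L : ℤ) + 1)) (insert ((L : ℤ) + 1) (Finset.Icc (-(L : ℤ)) L)) := by
      ext a; simp; omega
    rw [this, Finset.sum_insert (by simp; omega), Finset.sum_insert (by simp), ih,
      Finset.sum_range_succ]
    ring

/-- Quantitative form of the partial fraction expansion of `π cot (πx)`, truncated symmetrically at
`L ≥ 2x`; each later pair of terms is at most `4x (1/j - 1/(j+1))`, which telescopes. -/
lemma cot_partial (x : ℝ) (hx : 0 < x) (hxn : ∀ n : ℤ, x ≠ n) (L : ℕ) (hL : 2 * x ≤ L) :
    |π * Real.cot (π * x) - ∑ l ∈ Finset.Icc (-(L : ℤ)) L, 1 / (x + l)| ≤ 4 * x / L := by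
  set S : ℕ → ℝ := fun M => ∑ j ∈ Finset.range M, (1 / (x - (j + 1)) + 1 / (x + (j + 1))) with hS
  have hL0 : (0 : ℝ) < L := by linarith
  have e : ∑ l ∈ Finset.Icc (-(L : ℤ)) L, 1 / (x + l) = 1 / x + S L := by
    rw [sum_Icc_neg (fun l : ℤ => 1 / (x + l)), hS]
    congr 1
    · simp
    · refine Finset.sum_congr rfl fun j _ => ?_
      push_cast
      congr 2
  have hlim : Tendsto S atTop (𝓝 (π * Real.cot (π * x) - 1 / x)) := by
    have hc : (x : ℂ) ∈ Complex.integerComplement := by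
      rintro ⟨n, hn⟩
      exact hxn n (by exact_mod_cast hn.symm)
    have h := tendsto_logDeriv_euler_cot_sub hc
    have h2 := (Complex.continuous_re.tendsto _).comp h
    have e1 : (π * Complex.cot (π * x) - 1 / x : ℂ).re = π * Real.cot (π * x) - 1 / x := by
      rw [← Complex.ofReal_mul, ← Complex.ofReal_cot]
      norm_cast
    rw [e1] at h2
    refine h2.congr fun M => ?_
    simp only [Function.comp, hS, cotTerm, Complex.re_sum]
    refine Finset.sum_congr rfl fun j _ => ?_
    norm_cast
  have bd : ∀ M, L ≤ M → |S M - S L| ≤ 4 * x * (1 / L - 1 / M) := by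
    intro M hM
    induction M, hM using Nat.le_induction with
    | base => simp
    | succ M hM ih =>
      have hML : (L : ℝ) ≤ M := by exact_mod_cast hM
      have hM0 : (0 : ℝ) < M := by linarith
      have e2 : S (M + 1) - S L = (S M - S L) + (1 / (x - (M + 1)) + 1 / (x + (M + 1))) := by
        simp only [hS, Finset.sum_range_succ]; ring
      rw [e2]
      refine (abs_add_le _ _).trans ?_
      have hd : x - (M + 1) ≠ 0 := by linarith
      have hd' : (M : ℝ) + 1 - x ≠ 0 := by linarith
      have e3 : 1 / (x - (M + 1)) + 1 / (x + (M + 1))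
          = -(2 * x / (((M : ℝ) + 1 - x) * (M + 1 + x))) := by
        rw [show x - ((M : ℝ) + 1) = -((M : ℝ) + 1 - x) by ring]
        field_simp
        ring
      have hpos : 0 < ((M : ℝ) + 1 - x) * (M + 1 + x) :=
        mul_pos (by linarith) (by linarith)
      have h4 : |1 / (x - (M + 1)) + 1 / (x + (M + 1))| ≤ 4 * x * (1 / M - 1 / (M + 1)) := by
        rw [e3, abs_neg, abs_of_pos (by positivity)]
        have : (4 : ℝ) * x * (1 / M - 1 / (M + 1)) = 4 * x / (M * (M + 1)) := by
          field_simp; ring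
        rw [this, div_le_div_iff₀ hpos (by positivity)]
        have : (M : ℝ) * (M + 1) ≤ 2 * (((M : ℝ) + 1 - x) * (M + 1 + x)) := by nlinarith
        nlinarith
      push_cast
      linarith
  have : |(π * Real.cot (π * x) - 1 / x) - S L| ≤ 4 * x / L := by
    refine le_of_tendsto (hlim.sub_const (S L)).abs ?_
    filter_upwards [eventually_ge_atTop L] with M hM
    refine (bd M hM).trans ?_
    have : (0 : ℝ) ≤ 1 / M := by positivity
    rw [mul_sub, mul_one_div]
    nlinarith
  rw [e]
  convert this using 2
  ring

lemma sum_inv_le (k : ℕ) (hk : 2 ≤ k) :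
    ∑ n ∈ Finset.Icc 1 (k - 1), 1 / (n : ℝ) ≤ 1 + Real.log k := by
  have h := harmonic_le_one_add_log (k - 1)
  rw [harmonic_eq_sum_Icc] at h
  push_cast at h
  simp only [one_div]
  refine h.trans ?_
  gcongr
  · exact_mod_cast (by omega : 0 < k - 1)
  · exact_mod_cast (by omega : k - 1 ≤ k)

lemma inv_sin_le (k r : ℕ) (hr : 1 ≤ r) (hrk : r < k) :
    1 / (k * |Real.sin (π * r / k)|) ≤ (1 / (r : ℝ) + 1 / ((k - r : ℕ) : ℝ)) / 2 := by
  have main : ∀ s : ℕ, 1 ≤ s → 2 * s ≤ k → 1 / (k * |Real.sin (π * s / k)|) ≤ 1 / (s : ℝ) / 2 := by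
    intro s hs hsk
    have hs0 : (0 : ℝ) < s := by exact_mod_cast hs
    have hk0 : (0 : ℝ) < k := by exact_mod_cast (by omega : 0 < k)
    have hsk' : (2 : ℝ) * s ≤ k := by exact_mod_cast hsk
    have h := Real.mul_le_sin (x := π * s / k) (by positivity) (by
      rw [div_le_div_iff₀ hk0 (by norm_num)]
      nlinarith [Real.pi_pos])
    have e : 2 / π * (π * s / k) = 2 * s / k := by field_simp
    rw [e, div_le_iff₀ hk0] at h
    have h2 := le_abs_self (Real.sin (π * s / k))
    rw [div_div]
    apply one_div_le_one_div_of_le (by positivity)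
    nlinarith
  have hp1 : (0 : ℝ) ≤ 1 / (r : ℝ) := by positivity
  have hp2 : (0 : ℝ) ≤ 1 / ((k - r : ℕ) : ℝ) := by positivity
  by_cases h : 2 * r ≤ k
  · linarith [main r hr h]
  · have h1 := main (k - r) (by omega) (by omega)
    have hk0 : (k : ℝ) ≠ 0 := by exact_mod_cast (by omega : k ≠ 0)
    have e : π * ((k - r : ℕ) : ℝ) / k = π - π * r / k := by
      rw [Nat.cast_sub hrk.le]; field_simp
    rw [e, Real.sin_pi_sub] at h1
    linarith

lemma abs_sin_mod (a k : ℕ) (hk : 0 < k) :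
    |Real.sin (π * a / k)| = |Real.sin (π * (a % k : ℕ) / k)| := by
  have hk0 : (k : ℝ) ≠ 0 := by exact_mod_cast hk.ne'
  have e : π * a / k = π * (a % k : ℕ) / k + (a / k : ℕ) * π := by
    have : (a : ℝ) = (a % k : ℕ) + k * (a / k : ℕ) := by exact_mod_cast (Nat.mod_add_div a k).symm
    conv_lhs => rw [this]
    field_simp
  rw [e, Real.sin_add_nat_mul_pi]
  simp [abs_mul]

lemma not_dvd_of_coprime {h k n : ℕ} (hc : Nat.gcd h k = 1) (hn : 1 ≤ n) (hnk : n < k) :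
    ¬ k ∣ n * h := fun hd => by
  have : k ∣ n := (Nat.Coprime.dvd_of_dvd_mul_right (Nat.Coprime.symm hc) hd)
  exact absurd (Nat.le_of_dvd (by omega) this) (by omega)

/-- As `j` runs over `1, …, m < k`, the residues `jh mod k` are distinct and nonzero, so the sum is
dominated by the full sum over residues, which is a harmonic sum. -/
lemma sum_inv_sin_le (h k m : ℕ) (hc : Nat.gcd h k = 1) (hk : 2 ≤ k) (hm : m < k) :
    ∑ j ∈ Finset.Icc 1 m, 1 / (k * |Real.sin (π * (j * h : ℕ) / k)|) ≤ 1 + Real.log k := by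
  have hinj : Set.InjOn (fun j : ℕ => j * h % k) (Finset.Icc 1 m : Finset ℕ) := by
    intro a ha b hb hab
    simp only [Finset.coe_Icc, Set.mem_Icc] at ha hb
    have : a ≡ b [MOD k] := Nat.ModEq.cancel_right_of_coprime (Nat.gcd_comm h k ▸ hc) hab
    exact Nat.ModEq.eq_of_lt_of_lt this (by omega) (by omega)
  calc ∑ j ∈ Finset.Icc 1 m, 1 / (k * |Real.sin (π * (j * h : ℕ) / k)|)
      = ∑ j ∈ Finset.Icc 1 m, 1 / (k * |Real.sin (π * (j * h % k : ℕ) / k)|) := by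
        refine Finset.sum_congr rfl fun j _ => ?_
        rw [abs_sin_mod (j * h) k (by omega)]
    _ = ∑ r ∈ (Finset.Icc 1 m).image (fun j : ℕ => j * h % k),
          1 / (k * |Real.sin (π * (r : ℕ) / k)|) := by rw [Finset.sum_image hinj]
    _ ≤ ∑ r ∈ Finset.Icc 1 (k - 1), 1 / (k * |Real.sin (π * (r : ℕ) / k)|) := by
        refine Finset.sum_le_sum_of_subset_of_nonneg ?_ fun _ _ _ => by positivity
        intro r hr
        obtain ⟨j, hj, rfl⟩ := Finset.mem_image.mp hr
        rw [Finset.mem_Icc] at hj ⊢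
        have h1 := Nat.mod_lt (j * h) (by omega : k > 0)
        have h2 : j * h % k ≠ 0 := fun h0 =>
          not_dvd_of_coprime hc hj.1 (by omega) (Nat.dvd_of_mod_eq_zero h0)
        omega
    _ ≤ ∑ r ∈ Finset.Icc 1 (k - 1), (1 / (r : ℝ) + 1 / ((k - r : ℕ) : ℝ)) / 2 := by
        refine Finset.sum_le_sum fun r hr => ?_
        rw [Finset.mem_Icc] at hr
        exact inv_sin_le k r hr.1 (by omega)
    _ = ∑ r ∈ Finset.Icc 1 (k - 1), 1 / (r : ℝ) := by
        rw [← Finset.sum_div, Finset.sum_add_distrib]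
        have : ∑ r ∈ Finset.Icc 1 (k - 1), 1 / ((k - r : ℕ) : ℝ)
            = ∑ r ∈ Finset.Icc 1 (k - 1), 1 / (r : ℝ) := by
          refine Finset.sum_nbij' (fun r => k - r) (fun r => k - r) ?_ ?_ ?_ ?_ ?_
          all_goals intro r hr; simp only [Finset.mem_Icc] at *
          all_goals omega
        rw [this]; ring
    _ ≤ 1 + Real.log k := sum_inv_le k hk

theorem stmt10 : ∃ C : ℝ, 0 < C ∧ ∀ h k m : ℕ, 1 ≤ h → h < k → Nat.gcd h k = 1 → m < k →
    |(∑ j ∈ Finset.Icc 1 m, -Real.log (|2 * Real.sin (π * j * h / k)|))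
        - (k : ℝ) / (2 * π) *
            ∑ l ∈ Finset.Icc (-(k : ℤ) ^ 2) ((k : ℤ) ^ 2), ∑ n ∈ Finset.Icc 1 (k - 1),
              Real.sin (2 * π * m * (((n : ℤ) * h + l * k : ℤ) : ℝ) / k) /
                ((n : ℝ) * (((n : ℤ) * h + l * k : ℤ) : ℝ))|
      ≤ C * Real.log k := by
  refine ⟨9, by norm_num, ?_⟩
  intro h k m hh hhk hc hm
  have hk : 2 ≤ k := by omega
  have hkR : (2 : ℝ) ≤ k := by exact_mod_cast hk
  have hk0 : (0 : ℝ) < k := by linarith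
  have hlog : 1 / 2 ≤ Real.log k := by
    have := Real.log_le_log (by norm_num) hkR
    have := Real.log_two_gt_d9
    linarith
  have hpi := Real.pi_gt_three
  have hsin : ∀ j : ℕ, 1 ≤ j → j < k → Real.sin (π * ((j : ℝ) * h / k)) ≠ 0 := by
    intro j hj hjk h0
    rw [Real.sin_eq_zero_iff] at h0
    obtain ⟨n, hn⟩ := h0
    have h1 : (n : ℝ) * k = j * h := by
      field_simp at hn
      linarith
    have h2 : n * (k : ℤ) = (j * h : ℕ) := by exact_mod_cast h1
    exact not_dvd_of_coprime hc hj hjk (Int.natCast_dvd_natCast.mp ⟨n, by rw [← h2]; ring⟩)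
  set x : ℕ → ℝ := fun n => (n : ℝ) * h / k with hxdef
  have h_fourier : |(∑ j ∈ Finset.Icc 1 m, -Real.log (|2 * Real.sin (π * j * h / k)|))
      - ∑ j ∈ Finset.Icc 1 m, ∑ n ∈ Finset.Icc 1 (k - 1), Real.cos (n * (2 * π * x j)) / n|
      ≤ 1 + Real.log k := by
    rw [← Finset.sum_sub_distrib]
    refine (Finset.abs_sum_le_sum_abs _ _).trans
      (le_trans (Finset.sum_le_sum fun j hj => ?_) (sum_inv_sin_le h k m hc hk hm))
    rw [Finset.mem_Icc] at hj
    have := log_sin_tail (x j) (hsin j hj.1 (by omega)) k (by omega)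
    have e1 : π * x j = π * j * h / k := by simp only [hxdef]; ring
    have e2 : π * ((j * h : ℕ) : ℝ) / k = π * j * h / k := by push_cast; ring
    rw [e1] at this
    rw [e2]
    exact this
  have h_closed : ∑ j ∈ Finset.Icc 1 m, ∑ n ∈ Finset.Icc 1 (k - 1), Real.cos (n * (2 * π * x j)) / n
      = ∑ n ∈ Finset.Icc 1 (k - 1), ((Real.cos (m * (2 * π * x n)) - 1) / 2
          + Real.cot (π * x n) * Real.sin (m * (2 * π * x n)) / 2) / n := by
    rw [Finset.sum_comm]
    refine Finset.sum_congr rfl fun n hn => ?_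
    rw [Finset.mem_Icc] at hn
    have e : 2 * π * x n / 2 = π * x n := by ring
    have := sum_cos_eq (2 * π * x n) (by rw [e]; exact hsin n hn.1 (by omega)) m
    rw [e] at this
    rw [← this, Finset.sum_div]
    refine Finset.sum_congr rfl fun j _ => ?_
    congr 2
    simp only [hxdef]; ring
  have h_double : (k : ℝ) / (2 * π) *
            ∑ l ∈ Finset.Icc (-(k : ℤ) ^ 2) ((k : ℤ) ^ 2), ∑ n ∈ Finset.Icc 1 (k - 1),
              Real.sin (2 * π * m * (((n : ℤ) * h + l * k : ℤ) : ℝ) / k) /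
                ((n : ℝ) * (((n : ℤ) * h + l * k : ℤ) : ℝ))
      = ∑ n ∈ Finset.Icc 1 (k - 1), Real.sin (m * (2 * π * x n)) / (2 * π) *
          (∑ l ∈ Finset.Icc (-((k ^ 2 : ℕ) : ℤ)) ((k ^ 2 : ℕ) : ℤ), 1 / (x n + l)) / n := by
    rw [Finset.sum_comm, Finset.mul_sum]
    push_cast
    refine Finset.sum_congr rfl fun n hn => ?_
    rw [Finset.mul_sum, Finset.mul_sum, Finset.sum_div]
    refine Finset.sum_congr rfl fun l _ => ?_
    have e1 : Real.sin (2 * π * m * ((n : ℝ) * h + l * k) / k) = Real.sin (m * (2 * π * x n)) := by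
      rw [← Real.sin_add_int_mul_two_pi (m * (2 * π * x n)) (m * l)]
      congr 1
      simp only [hxdef]; push_cast; field_simp
    have e2 : x n + l = ((n : ℝ) * h + l * k) / k := by simp only [hxdef]; field_simp
    rw [e1, e2, one_div_div]
    simp only [div_eq_mul_inv, mul_inv]
    ring
  have h_cot : |∑ n ∈ Finset.Icc 1 (k - 1), ((Real.cos (m * (2 * π * x n)) - 1) / 2
          + Real.cot (π * x n) * Real.sin (m * (2 * π * x n)) / 2) / n
      - ∑ n ∈ Finset.Icc 1 (k - 1), Real.sin (m * (2 * π * x n)) / (2 * π) *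
          (∑ l ∈ Finset.Icc (-((k ^ 2 : ℕ) : ℤ)) ((k ^ 2 : ℕ) : ℤ), 1 / (x n + l)) / n|
      ≤ 2 * (1 + Real.log k) := by
    rw [← Finset.sum_sub_distrib]
    refine (Finset.abs_sum_le_sum_abs _ _).trans ?_
    refine le_trans ?_ (mul_le_mul_of_nonneg_left (sum_inv_le k hk) (by norm_num : (0 : ℝ) ≤ 2))
    rw [Finset.mul_sum]
    refine Finset.sum_le_sum fun n hn => ?_
    rw [Finset.mem_Icc] at hn
    have hn0 : (0 : ℝ) < n := by exact_mod_cast hn.1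
    have hh0 : (0 : ℝ) < h := by exact_mod_cast hh
    have hnk : (n : ℝ) ≤ k := by exact_mod_cast (by omega : n ≤ k)
    have hhkR : (h : ℝ) ≤ k := by exact_mod_cast hhk.le
    have hx0 : 0 < x n := by simp only [hxdef]; positivity
    have hxk : x n ≤ k := by
      simp only [hxdef]
      rw [div_le_iff₀ hk0]
      exact mul_le_mul hnk hhkR hh0.le hk0.le
    have hxi : ∀ z : ℤ, x n ≠ z := by
      intro z hz
      apply hsin n hn.1 (by omega)
      change Real.sin (π * x n) = 0
      rw [hz, mul_comm]
      exact Real.sin_int_mul_pi z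
    have hcot := cot_partial (x n) hx0 hxi (k ^ 2) (by push_cast; nlinarith)
    have hb : 4 * x n / ((k ^ 2 : ℕ) : ℝ) ≤ 2 := by
      push_cast
      rw [div_le_iff₀ (by positivity)]
      nlinarith
    set T := ∑ l ∈ Finset.Icc (-((k ^ 2 : ℕ) : ℤ)) ((k ^ 2 : ℕ) : ℤ), 1 / (x n + l)
    set s := Real.sin (m * (2 * π * x n)) with hs
    set c := Real.cos (m * (2 * π * x n)) with hcdef
    have e : ((c - 1) / 2 + Real.cot (π * x n) * s / 2) / n - s / (2 * π) * T / n
        = ((c - 1) / 2 + s * (π * Real.cot (π * x n) - T) / (2 * π)) / n := by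
      field_simp
      ring
    rw [e, abs_div, abs_of_pos hn0, mul_one_div]
    gcongr
    refine (abs_add_le _ _).trans ?_
    have h1 : |(c - 1) / 2| ≤ 1 := by
      rw [abs_le]
      constructor <;> linarith [Real.neg_one_le_cos (m * (2 * π * x n)),
        Real.cos_le_one (m * (2 * π * x n))]
    have h2 : |s * (π * Real.cot (π * x n) - T) / (2 * π)| ≤ 1 := by
      rw [abs_div, abs_mul, abs_of_pos (by positivity : 0 < 2 * π), div_le_one (by positivity)]
      have h3 : |s| ≤ 1 := Real.abs_sin_le_one _
      calc |s| * |π * Real.cot (π * x n) - T| ≤ 1 * 2 :=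
            mul_le_mul h3 (hcot.trans hb) (abs_nonneg _) (by norm_num)
        _ ≤ 2 * π := by linarith
    linarith
  -- In total `3 (1 + log k)`, and `1 ≤ 2 log k` because `k ≥ 2`.
  rw [h_double]
  rw [h_closed] at h_fourier
  refine (abs_sub_le _ _ _).trans ((add_le_add h_fourier h_cot).trans ?_)
  linarith
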